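/- arXiv:1412.8768 — 2 statements merged into one kernel-verified Lean document; each statement's English description precedes it below -/
import Mathlib

section
/- For every integer p ≥ 1, the deformed CMS integral L_p commutes with L_2: [L_p, L_2] = 0 as ℂ-linear operators on the field F = ℂ(x_1,…,x_{n+m}). -/
/-!
The proof exhibits a quantum Lax pair. Write `κ_i = k^{p(i)}`, `c_i = k^{1-p(i)}`,
`w_i = k^{-p(i)}`, and let `e` be the vector with all entries `1`. The recursion defining
`∂_i^{(p)}` says that `(∂_i^{(p)})_i = 𝓛^p e` for the Moser matrix `𝓛` (`laxL`), which sends a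
vector `u` of functions to `κ_i ∂_i u_i - ∑_j c_j x_i/(x_i - x_j) (u_i - u_j)`; see `Dpow_eq`.
Hence `L_p = wᵀ 𝓛^p e`, and a direct computation gives
`L_2 = ∑_a (κ_a ∂_a² - A_a ∂_a)` with `A_a = ∑_b c_b (x_a + x_b)/(x_a - x_b)` (`ham_eq`).

Let `M` (`laxM`) be the matrix `(M u)_i = ∑_j 2 c_j x_i x_j/(x_i - x_j)² (u_i - u_j)`. The Lax
equation `[𝓛, L_2 + M] = 0` is the lemma `lax`: the first-order terms of the commutators cancel
because `κ_i c_i = k` for all `i`, and the remaining multiplication terms cancel by a rational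
identity in three coordinates (`three_body`) together with the fact that `κ_i + c_i = 1 + k`
for all `i` (`bracket`). Since `M e = 0` and `wᵀ M = 0`, it follows that
`L_p L_2 = wᵀ 𝓛^p (L_2 + M) e = wᵀ (L_2 + M) 𝓛^p e = L_2 L_p` (`commute_ham`).

The Lax equation also uses that the Euler derivations commute. This holds because their
commutators are derivations of the rational function field which vanish on the coordinates.
-/

set_option synthInstance.maxHeartbeats 400000
set_option maxHeartbeats 1000000

noncomputable section
open scoped BigOperators

/-- The field of rational functions `ℂ(x₁,…,x_N)`. -/
def Fld (N : ℕ) : Type := FractionRing (MvPolynomial (Fin N) ℂ)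

instance (N : ℕ) : Field (Fld N) :=
  inferInstanceAs (Field (FractionRing (MvPolynomial (Fin N) ℂ)))
instance (N : ℕ) : Algebra ℂ (Fld N) :=
  inferInstanceAs (Algebra ℂ (FractionRing (MvPolynomial (Fin N) ℂ)))
instance (N : ℕ) : Algebra (MvPolynomial (Fin N) ℂ) (Fld N) :=
  inferInstanceAs (Algebra (MvPolynomial (Fin N) ℂ) (FractionRing (MvPolynomial (Fin N) ℂ)))

/-- The coordinate `x_i` as an element of `ℂ(x₁,…,x_N)`; for `N = n + m` the last `m`
coordinates are the variables `y_j = x_{n+j}`. -/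
def xv {N : ℕ} (i : Fin N) : Fld N :=
  algebraMap (MvPolynomial (Fin N) ℂ) (Fld N) (MvPolynomial.X i)

/-- The parity function: `p(i) = 0` on the first `n` indices, `p(i) = 1` on the rest. -/
def par (n : ℕ) {N : ℕ} (i : Fin N) : ℕ := if (i : ℕ) < n then 0 else 1

/-- `ℂ`-linear operators on `ℂ(x₁,…,x_N)`. -/
abbrev EndF (N : ℕ) := Fld N →ₗ[ℂ] Fld N

/-- Multiplication by a rational function, as a `ℂ`-linear operator. -/
def mulOp {N : ℕ} (a : Fld N) : EndF N := LinearMap.mulLeft ℂ a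

/-- The recursively defined operators `∂_i^{(p)}`:
`∂_i^{(1)} = k^{p(i)} ∂_i` and
`∂_i^{(p)} = ∂_i^{(1)} ∂_i^{(p-1)} − Σ_{j≠i} k^{1-p(j)} (x_i/(x_i-x_j)) (∂_i^{(p-1)} − ∂_j^{(p-1)})`. -/
def Dpow (n : ℕ) (k : ℂ) {N : ℕ} (Deul : Fin N → EndF N) : ℕ → Fin N → EndF N
  | 0 => fun _ => 0
  | 1 => fun i => (k ^ par n i) • Deul i
  | (p+2) => fun i =>
      ((k ^ par n i) • Deul i) ∘ₗ Dpow n k Deul (p+1) i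
        - ∑ j ∈ Finset.univ.erase i,
            (k ^ (1 - par n j)) •
              (mulOp (xv i / (xv i - xv j)) ∘ₗ (Dpow n k Deul (p+1) i - Dpow n k Deul (p+1) j))

/-- The deformed CMS integrals `L_p = Σ_i k^{-p(i)} ∂_i^{(p)}`. -/
def Ltot (n : ℕ) (k : ℂ) {N : ℕ} (Deul : Fin N → EndF N) (p : ℕ) : EndF N :=
  ∑ i : Fin N, (k⁻¹ ^ par n i) • Dpow n k Deul p i

/-- `Deul` is the family of Euler derivations `∂_i = x_i ∂/∂x_i`: each `Deul i` is a `ℂ`-linear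
operator on `ℂ(x₁,…,x_N)` satisfying the Leibniz rule and taking the prescribed values on the
coordinates (these properties determine it uniquely). -/
def IsEulerFamily {N : ℕ} (Deul : Fin N → EndF N) : Prop :=
  (∀ (i : Fin N) (f g : Fld N), Deul i (f * g) = f * Deul i g + Deul i f * g) ∧
  (∀ i j : Fin N, Deul i (xv j) = if j = i then xv j else 0)

/-! ### The Lax pair over a field with commuting derivations -/

set_option linter.unusedSectionVars false

section LaxPair

variable {K ι : Type*} [Field K] [Algebra ℂ K] [Fintype ι] [DecidableEq ι]

/-- The function `x_i/(x_i - x_j)`; it vanishes for `i = j` because of division by zero, so sums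
over `j ≠ i` may be taken over all `j`. -/
def fF (x : ι → K) (i j : ι) : K := x i / (x i - x j)

/-- The function `x_i x_j/(x_i - x_j)²`, again zero for `i = j`. -/
def gF (x : ι → K) (i j : ι) : K := x i * x j / (x i - x j) ^ 2

/-- The function `(x_i + x_j)/(x_i - x_j)`, again zero for `i = j`. -/
def hF (x : ι → K) (i j : ι) : K := (x i + x j) / (x i - x j)

lemma fF_self (x : ι → K) (i : ι) : fF x i i = 0 := by simp [fF]

lemma gF_self (x : ι → K) (i : ι) : gF x i i = 0 := by simp [gF]

lemma hF_self (x : ι → K) (i : ι) : hF x i i = 0 := by simp [hF]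

lemma gF_symm (x : ι → K) (i j : ι) : gF x i j = gF x j i := by
  unfold gF; rw [mul_comm (x i), ← neg_sub (x j) (x i), neg_sq]

lemma hF_eq (x : ι → K) (i j : ι) : hF x i j = fF x i j - fF x j i := by
  unfold hF fF; rw [← neg_sub (x i) (x j), div_neg]; ring

lemma hF_antisymm (x : ι → K) (i j : ι) : hF x j i = - hF x i j := by
  rw [hF_eq, hF_eq]; ring

/-- The three-body identity for pairwise distinct coordinates. -/
lemma three_body {x : ι → K} (hx : Function.Injective x) {i j l : ι}
    (hij : i ≠ j) (hil : i ≠ l) (hjl : j ≠ l) :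
    gF x i j * (hF x i l - hF x j l) =
      2 * ((fF x i j * gF x j l - gF x i j * fF x j l - fF x i j * gF x i l)
        - (fF x i l * gF x l j - gF x i l * fF x l j - fF x i l * gF x i j)) := by
  have h1 : x i - x j ≠ 0 := sub_ne_zero.2 (hx.ne hij)
  have h2 : x i - x l ≠ 0 := sub_ne_zero.2 (hx.ne hil)
  have h3 : x j - x l ≠ 0 := sub_ne_zero.2 (hx.ne hjl)
  have h4 : x l - x j ≠ 0 := sub_ne_zero.2 (hx.ne hjl.symm)
  rw [gF_symm x l j]
  have e : fF x l j = - (x l / (x j - x l)) := by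
    unfold fF; rw [← neg_sub (x j) (x l), div_neg]
  rw [e]
  unfold gF hF fF
  field_simp
  ring

/-- The deformed Moser matrix, acting on vectors of functions. -/
def laxL (x : ι → K) (d : ι → Derivation ℂ K K) (κ c : ι → K) (u : ι → K) (i : ι) : K :=
  κ i * d i (u i) - ∑ j, c j * (fF x i j * (u i - u j))

/-- The second matrix of the Lax pair. It annihilates constant vectors. -/
def laxM (x : ι → K) (c : ι → K) (u : ι → K) (i : ι) : K :=
  ∑ j, 2 * c j * (gF x i j * (u i - u j))

/-- The coefficient `∑_b c_b (x_a + x_b)/(x_a - x_b)` of the first-order part of the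
Hamiltonian. -/
def coefA (x : ι → K) (c : ι → K) (a : ι) : K := ∑ b, c b * hF x a b

/-- The deformed CMS Hamiltonian `∑_a (κ_a ∂_a² - A_a ∂_a)`, which is `L_2`. -/
def ham (x : ι → K) (d : ι → Derivation ℂ K K) (κ c : ι → K) : K →+ K :=
  AddMonoidHom.mk' (fun v => ∑ a, (κ a * d a (d a v) - coefA x c a * d a v)) (by
    intro v w
    rw [← Finset.sum_add_distrib]
    refine Finset.sum_congr rfl fun a _ => ?_
    simp only [map_add]; ring)

lemma ham_apply (x : ι → K) (d : ι → Derivation ℂ K K) (κ c : ι → K) (v : K) :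
    ham x d κ c v = ∑ a, (κ a * d a (d a v) - coefA x c a * d a v) := rfl

/-- Leibniz rule for the second-order operator `ham`. -/
lemma ham_mul (x : ι → K) (d : ι → Derivation ℂ K K) (κ c : ι → K) (v w : K) :
    ham x d κ c (v * w) = ham x d κ c v * w + v * ham x d κ c w
      + ∑ a, 2 * κ a * (d a v * d a w) := by
  simp only [ham_apply, Finset.sum_mul, Finset.mul_sum, ← Finset.sum_add_distrib]
  refine Finset.sum_congr rfl fun a _ => ?_
  simp only [Derivation.leibniz, smul_eq_mul, map_add]
  ring

lemma ham_const_mul (x : ι → K) (d : ι → Derivation ℂ K K) (κ c : ι → K) (v w : K)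
    (hv : ∀ a, d a v = 0) :
    ham x d κ c (v * w) = v * ham x d κ c w := by
  simp [ham_mul, hv, ham_apply x d κ c v]

variable {x : ι → K} {d : ι → Derivation ℂ K K} {κ c : ι → K} {q s : K}

lemma d_fF (hx : Function.Injective x) (hd : ∀ i j, d i (x j) = if j = i then x j else 0)
    (a i j : ι) :
    d a (fF x i j) = ((if j = a then 1 else 0) - (if i = a then 1 else 0)) * gF x i j := by
  by_cases hij : i = j
  · subst hij; simp [fF_self, gF_self]
  have h1 : x i - x j ≠ 0 := sub_ne_zero.2 (hx.ne hij)
  unfold fF gF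
  rw [Derivation.leibniz_div]
  simp only [smul_eq_mul, map_sub, hd]
  split_ifs <;> field_simp <;> ring

lemma d_gF (hx : Function.Injective x) (hd : ∀ i j, d i (x j) = if j = i then x j else 0)
    (a i j : ι) :
    d a (gF x i j) =
      ((if j = a then 1 else 0) - (if i = a then 1 else 0)) * (gF x i j * hF x i j) := by
  by_cases hij : i = j
  · subst hij; simp [gF_self]
  have h1 : x i - x j ≠ 0 := sub_ne_zero.2 (hx.ne hij)
  unfold gF hF
  rw [Derivation.leibniz_div]
  simp only [smul_eq_mul, map_sub, hd, pow_two, Derivation.leibniz]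
  split_ifs <;> field_simp <;> ring

lemma d_hF (hx : Function.Injective x) (hd : ∀ i j, d i (x j) = if j = i then x j else 0)
    (a i j : ι) :
    d a (hF x i j) =
      2 * ((if j = a then 1 else 0) - (if i = a then 1 else 0)) * gF x i j := by
  rw [hF_eq, map_sub, d_fF hx hd, d_fF hx hd, gF_symm x j i]; ring

/-- The commutator of `κ_i ∂_i` with the Hamiltonian. -/
lemma d_ham (hx : Function.Injective x) (hd : ∀ i j, d i (x j) = if j = i then x j else 0)
    (hcomm : ∀ i j v, d i (d j v) = d j (d i v))
    (hκ : ∀ a i, d a (κ i) = 0) (hc : ∀ a i, d a (c i) = 0)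
    (hq : ∀ i, κ i * c i = q) (i : ι) (v : K) :
    κ i * d i (ham x d κ c v) = ham x d κ c (κ i * d i v)
      + ∑ j, 2 * c j * (gF x i j * (κ i * d i v - κ j * d j v)) := by
  have hA : ∀ a, d i (coefA x c a) =
      2 * c i * gF x a i - if a = i then ∑ b, 2 * c b * gF x i b else 0 := by
    intro a
    unfold coefA
    simp only [map_sum, Derivation.leibniz, hc, smul_eq_mul, mul_zero, add_zero, d_hF hx hd]
    by_cases hai : a = i
    · subst hai
      simp only [gF_self, if_true, ← Finset.sum_neg_distrib, mul_zero, zero_sub]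
      refine Finset.sum_congr rfl fun b _ => ?_
      by_cases hb : b = a
      · subst hb; simp [gF_self]
      · simp [hb]; ring
    · simp only [hai, if_false, sub_zero]
      rw [Finset.sum_eq_single i]
      · simp; ring
      · intro b _ hb; simp [hb]
      · simp
  have h1 : d i (ham x d κ c v) = ham x d κ c (d i v) - ∑ a, d i (coefA x c a) * d a v := by
    simp only [ham_apply, map_sum, ← Finset.sum_sub_distrib]
    refine Finset.sum_congr rfl fun a _ => ?_
    simp only [map_sub, Derivation.leibniz, hκ, smul_eq_mul, mul_zero, add_zero]
    rw [hcomm i a (d a v), hcomm i a v]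
    ring
  rw [ham_const_mul _ _ _ _ _ _ (fun a => hκ a i), h1]
  simp only [hA, sub_mul, ite_mul, zero_mul, Finset.sum_sub_distrib, Finset.sum_ite_eq',
    Finset.mem_univ, if_true]
  have h2 : κ i * ∑ a, 2 * c i * gF x a i * d a v = ∑ j, 2 * c j * (gF x i j * (κ j * d j v)) := by
    rw [Finset.mul_sum]
    refine Finset.sum_congr rfl fun a _ => ?_
    rw [gF_symm x a i]
    linear_combination (2 * gF x i a * d a v) * (hq i - hq a)
  have h3 : κ i * ((∑ b, 2 * c b * gF x i b) * d i v)
      = ∑ j, 2 * c j * (gF x i j * (κ i * d i v)) := by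
    rw [Finset.sum_mul, Finset.mul_sum]
    exact Finset.sum_congr rfl fun a _ => by ring
  simp only [mul_sub, Finset.sum_sub_distrib]
  linear_combination h3 - h2

/-- The Hamiltonian applied to an off-diagonal entry of the Moser matrix. -/
lemma ham_fF (hx : Function.Injective x) (hd : ∀ i j, d i (x j) = if j = i then x j else 0)
    (i j : ι) :
    ham x d κ c (fF x i j) = (κ i + κ j) * (gF x i j * hF x i j)
      + (coefA x c i - coefA x c j) * gF x i j := by
  by_cases hij : i = j
  · subst hij; simp [fF_self, gF_self]
  have h : ∀ a, κ a * d a (d a (fF x i j)) - coefA x c a * d a (fF x i j) =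
      (if i = a then κ a * (gF x i j * hF x i j) + coefA x c a * gF x i j else 0)
      + (if j = a then κ a * (gF x i j * hF x i j) - coefA x c a * gF x i j else 0) := by
    intro a
    rw [d_fF hx hd, Derivation.leibniz, d_gF hx hd]
    have h0 : d a ((if j = a then 1 else 0) - (if i = a then 1 else 0)) = 0 := by
      split_ifs <;> simp
    rw [h0]
    simp only [smul_eq_mul]
    by_cases h1 : i = a
    · have h2 : j ≠ a := fun h => hij (h1.trans h.symm)
      simp [h1, h2]
    · by_cases h2 : j = a <;> simp [h1, h2]
  rw [ham_apply, Finset.sum_congr rfl fun a _ => h a, Finset.sum_add_distrib]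
  simp only [Finset.sum_ite_eq, Finset.mem_univ, if_true]
  ring

/-- The commutator of the Hamiltonian with the multiplication part of the Moser matrix. -/
lemma ham_offdiag (hx : Function.Injective x)
    (hd : ∀ i j, d i (x j) = if j = i then x j else 0) (hc : ∀ a i, d a (c i) = 0)
    (u : ι → K) (i : ι) :
    ham x d κ c (∑ j, c j * (fF x i j * (u i - u j))) =
      ∑ j, c j * (fF x i j * (ham x d κ c (u i) - ham x d κ c (u j)))
      + ∑ j, c j * (((κ i + κ j) * (gF x i j * hF x i j)
          + (coefA x c i - coefA x c j) * gF x i j) * (u i - u j)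
        - 2 * gF x i j * (κ i * (d i (u i) - d i (u j)) - κ j * (d j (u i) - d j (u j)))) := by
  rw [map_sum, ← Finset.sum_add_distrib]
  refine Finset.sum_congr rfl fun j _ => ?_
  rw [ham_const_mul _ _ _ _ _ _ (fun a => hc a j), ham_mul, ham_fF hx hd]
  have h : ∑ a, 2 * κ a * (d a (fF x i j) * d a (u i - u j)) =
      2 * κ j * (gF x i j * d j (u i - u j)) - 2 * κ i * (gF x i j * d i (u i - u j)) := by
    simp only [d_fF hx hd, sub_mul, ite_mul, one_mul, zero_mul, mul_sub, mul_ite, mul_zero,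
      Finset.sum_sub_distrib, Finset.sum_ite_eq, Finset.mem_univ, if_true]
  rw [h]
  simp only [map_sub]
  ring

lemma d_laxM (hx : Function.Injective x)
    (hd : ∀ i j, d i (x j) = if j = i then x j else 0) (hc : ∀ a i, d a (c i) = 0)
    (u : ι → K) (i : ι) :
    d i (laxM x c u i) =
      ∑ j, 2 * c j * (gF x i j * (d i (u i) - d i (u j)) - gF x i j * hF x i j * (u i - u j)) := by
  unfold laxM
  rw [map_sum]
  refine Finset.sum_congr rfl fun j _ => ?_
  by_cases hij : j = i
  · subst hij; simp [gF_self]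
  have h2 : d i (2 : K) = 0 := by
    have := (d i).map_natCast 2
    simpa using this
  simp only [Derivation.leibniz, hc, h2, d_gF hx hd, smul_eq_mul, map_sub, hij, if_true, if_false]
  ring

/-- The terms with `l ≠ i, j` match by `three_body`; the terms `l = i` and `l = j` leave
`(c_j - c_i) g_ij h_ij`, which is compensated because `κ_i + c_i` does not depend on `i`. -/
lemma bracket (hx : Function.Injective x) (hs : ∀ i, κ i + c i = s) {i j : ι} (hij : i ≠ j) :
    (κ j - κ i) * (gF x i j * hF x i j) + (coefA x c i - coefA x c j) * gF x i j =
      ∑ l, c l * (2 * ((fF x i j * gF x j l - gF x i j * fF x j l - fF x i j * gF x i l)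
        - (fF x i l * gF x l j - gF x i l * fF x l j - fF x i l * gF x i j))) := by
  have h : ∀ l, c l * (gF x i j * (hF x i l - hF x j l)) -
      c l * (2 * ((fF x i j * gF x j l - gF x i j * fF x j l - fF x i j * gF x i l)
        - (fF x i l * gF x l j - gF x i l * fF x l j - fF x i l * gF x i j))) =
      (if i = l then - c l * (gF x i j * hF x i j) else 0)
      + (if j = l then c l * (gF x i j * hF x i j) else 0) := by
    intro l
    by_cases hil : i = l
    · subst hil
      simp only [hij.symm, if_true, if_false, fF_self, gF_self, hF_self, gF_symm x j i,
        hF_antisymm x i j, hF_eq x i j]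
      ring
    · by_cases hjl : j = l
      · subst hjl
        simp only [hij, if_true, if_false, fF_self, gF_self, hF_self]
        ring
      · rw [three_body hx hij hil hjl]
        simp [hil, hjl]
  have h' := Finset.sum_congr rfl fun l (_ : l ∈ (Finset.univ : Finset ι)) => h l
  rw [Finset.sum_sub_distrib, Finset.sum_add_distrib] at h'
  simp only [Finset.sum_ite_eq, Finset.mem_univ, if_true] at h'
  have hA : (coefA x c i - coefA x c j) * gF x i j =
      ∑ l, c l * (gF x i j * (hF x i l - hF x j l)) := by
    unfold coefA
    rw [← Finset.sum_sub_distrib, Finset.sum_mul]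
    exact Finset.sum_congr rfl fun l _ => by ring
  rw [hA]
  linear_combination h' + (gF x i j * hF x i j) * (hs j - hs i)

/-- The commutator of the multiplication parts of the two Lax matrices. -/
lemma comm_offdiag (hx : Function.Injective x) (hs : ∀ i, κ i + c i = s) (u : ι → K) (i : ι) :
    ∑ j, c j * (fF x i j * (laxM x c u i - laxM x c u j))
      - ∑ j, 2 * c j * (gF x i j * (∑ l, c l * (fF x i l * (u i - u l))
          - ∑ l, c l * (fF x j l * (u j - u l)))) =
    ∑ j, c j * (((κ j - κ i) * (gF x i j * hF x i j)
      + (coefA x c i - coefA x c j) * gF x i j) * (u i - u j)) := by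
  have hR : ∀ j, c j * (((κ j - κ i) * (gF x i j * hF x i j)
      + (coefA x c i - coefA x c j) * gF x i j) * (u i - u j)) =
      ∑ l, c j * c l * (u i - u j) *
        (2 * ((fF x i j * gF x j l - gF x i j * fF x j l - fF x i j * gF x i l)
        - (fF x i l * gF x l j - gF x i l * fF x l j - fF x i l * gF x i j))) := by
    intro j
    by_cases hij : i = j
    · subst hij; simp
    rw [bracket hx hs hij, Finset.sum_mul, Finset.mul_sum]
    exact Finset.sum_congr rfl fun l _ => by ring
  rw [Finset.sum_congr rfl fun j _ => hR j]
  unfold laxM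
  simp only [← Finset.sum_sub_distrib, Finset.mul_sum]
  -- The two double sums differ by a sum of the form `∑ (Z j l - Z l j)`.
  rw [← sub_eq_zero, ← Finset.sum_sub_distrib]
  simp only [← Finset.sum_sub_distrib]
  let Z : ι → ι → K := fun j l => -2 * c j * c l *
    (gF x i j * fF x i l * (u i - u l)
      + (fF x i j * gF x j l - gF x i j * fF x j l - fF x i j * gF x i l) * (u i - u l))
  have hZ : ∑ j, ∑ l, (Z j l - Z l j) = 0 := by
    simp only [Finset.sum_sub_distrib]
    rw [sub_eq_zero, Finset.sum_comm]
  rw [← hZ]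
  refine Finset.sum_congr rfl fun j _ => Finset.sum_congr rfl fun l _ => ?_
  simp only [Z]
  ring

/-- The Lax equation: the Moser matrix commutes with `L_2 + M`. -/
lemma lax (hx : Function.Injective x) (hd : ∀ i j, d i (x j) = if j = i then x j else 0)
    (hcomm : ∀ i j v, d i (d j v) = d j (d i v))
    (hκ : ∀ a i, d a (κ i) = 0) (hc : ∀ a i, d a (c i) = 0)
    (hq : ∀ i, κ i * c i = q) (hs : ∀ i, κ i + c i = s) (u : ι → K) :
    laxL x d κ c (fun i => ham x d κ c (u i) + laxM x c u i) =
      fun i => ham x d κ c (laxL x d κ c u i) + laxM x c (laxL x d κ c u) i := by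
  funext i
  have e1 := d_ham hx hd hcomm hκ hc hq i (u i)
  have e2 := ham_offdiag (κ := κ) hx hd hc u i
  have e3 := d_laxM hx hd hc u i
  have e4 := comm_offdiag hx hs u i
  have e5 : laxM x c (laxL x d κ c u) i =
      ∑ j, 2 * c j * (gF x i j * (κ i * d i (u i) - κ j * d j (u j)))
      - ∑ j, 2 * c j * (gF x i j * (∑ l, c l * (fF x i l * (u i - u l))
          - ∑ l, c l * (fF x j l * (u j - u l)))) := by
    rw [← Finset.sum_sub_distrib]
    unfold laxM laxL
    exact Finset.sum_congr rfl fun j _ => by ring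
  have e6 : ∑ j, c j * (fF x i j * (ham x d κ c (u i) + laxM x c u i
        - (ham x d κ c (u j) + laxM x c u j))) =
      ∑ j, c j * (fF x i j * (ham x d κ c (u i) - ham x d κ c (u j)))
      + ∑ j, c j * (fF x i j * (laxM x c u i - laxM x c u j)) := by
    rw [← Finset.sum_add_distrib]
    exact Finset.sum_congr rfl fun j _ => by ring
  have e7 : ∑ j, 2 * c j * (gF x i j * (κ i * d i (u i) - κ j * d j (u i)))
      + κ i * (∑ j, 2 * c j * (gF x i j * (d i (u i) - d i (u j))
          - gF x i j * hF x i j * (u i - u j)))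
      + ∑ j, c j * (((κ i + κ j) * (gF x i j * hF x i j)
          + (coefA x c i - coefA x c j) * gF x i j) * (u i - u j)
        - 2 * gF x i j * (κ i * (d i (u i) - d i (u j)) - κ j * (d j (u i) - d j (u j))))
      = ∑ j, 2 * c j * (gF x i j * (κ i * d i (u i) - κ j * d j (u j)))
      + ∑ j, c j * (((κ j - κ i) * (gF x i j * hF x i j)
      + (coefA x c i - coefA x c j) * gF x i j) * (u i - u j)) := by
    rw [Finset.mul_sum]
    simp only [← Finset.sum_add_distrib]
    exact Finset.sum_congr rfl fun j _ => by ring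
  rw [e5]
  unfold laxL
  rw [map_sub, map_add, e6, e2, e3]
  linear_combination e1 + e7 - e4

/-- The operator `wᵀ 𝓛² e`, which is `L_2`, equals the Hamiltonian. -/
lemma ham_eq {w : ι → K} (hκ : ∀ a i, d a (κ i) = 0)
    (hq : ∀ i, κ i * c i = q) (hw : ∀ i, w i * κ i = 1) (v : K) :
    ∑ i, w i * laxL x d κ c (laxL x d κ c fun _ => v) i = ham x d κ c v := by
  have hcw : ∀ i, c i = q * w i := fun i => by
    linear_combination w i * hq i - c i * hw i
  have h1 : (laxL x d κ c fun _ => v) = fun i => κ i * d i v := by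
    funext i; simp [laxL]
  have h2 : ∀ i, w i * laxL x d κ c (fun i => κ i * d i v) i =
      κ i * d i (d i v) - ∑ j, (c j * fF x i j * d i v - q * w i * w j * fF x i j * κ j * d j v) := by
    intro i
    unfold laxL
    simp only [Derivation.leibniz, hκ, smul_eq_mul, mul_zero, add_zero]
    rw [mul_sub, Finset.mul_sum]
    congr 1
    · linear_combination κ i * d i (d i v) * hw i
    · refine Finset.sum_congr rfl fun j _ => ?_
      rw [hcw j]
      linear_combination q * w j * fF x i j * d i v * hw i
  rw [h1, Finset.sum_congr rfl fun i _ => h2 i, ham_apply]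
  simp only [Finset.sum_sub_distrib, coefA]
  congr 1
  rw [Finset.sum_comm (f := fun i j => q * w i * w j * fF x i j * κ j * d j v),
    ← Finset.sum_sub_distrib]
  refine Finset.sum_congr rfl fun i _ => ?_
  rw [← Finset.sum_sub_distrib, Finset.sum_mul]
  refine Finset.sum_congr rfl fun j _ => ?_
  rw [hF_eq, hcw j]
  linear_combination (- q * w j * fF x j i * d i v) * hw i

/-- The row vector `w` is annihilated by `M`, because `w_i c_j` is symmetric in `i` and `j`. -/
lemma weight_laxM {w : ι → K} (hcw : ∀ i, c i = q * w i) (u : ι → K) :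
    ∑ i, w i * laxM x c u i = 0 := by
  unfold laxM
  simp only [Finset.mul_sum]
  have h : ∀ i j, w i * (2 * c j * (gF x i j * (u i - u j))) =
      2 * q * w i * w j * gF x i j * u i - 2 * q * w j * w i * gF x j i * u j := fun i j => by
    rw [hcw j, gF_symm x j i]; ring
  simp only [h, Finset.sum_sub_distrib]
  rw [sub_eq_zero, Finset.sum_comm]

/-- The operator `v ↦ ∑ w_i (𝓛^p (v, …, v))_i` commutes with the Hamiltonian. -/
lemma commute_ham {w : ι → K} (hx : Function.Injective x)
    (hd : ∀ i j, d i (x j) = if j = i then x j else 0)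
    (hcomm : ∀ i j v, d i (d j v) = d j (d i v))
    (hκ : ∀ a i, d a (κ i) = 0) (hc : ∀ a i, d a (c i) = 0) (hdw : ∀ a i, d a (w i) = 0)
    (hq : ∀ i, κ i * c i = q) (hs : ∀ i, κ i + c i = s) (hw : ∀ i, w i * κ i = 1)
    (p : ℕ) (v : K) :
    ∑ i, w i * ((laxL x d κ c)^[p] (fun _ => ham x d κ c v)) i =
      ham x d κ c (∑ i, w i * ((laxL x d κ c)^[p] (fun _ => v)) i) := by
  let P : (ι → K) → ι → K := fun u i => ham x d κ c (u i) + laxM x c u i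
  have hLP : Function.Commute (laxL x d κ c) P := fun u => lax hx hd hcomm hκ hc hq hs u
  have h1 : (fun _ => ham x d κ c v) = P fun _ => v := by
    funext i; simp [P, laxM]
  have hcw : ∀ i, c i = q * w i := fun i => by
    linear_combination w i * hq i - c i * hw i
  rw [h1, (hLP.iterate_left p).eq]
  simp only [P, mul_add, Finset.sum_add_distrib]
  rw [weight_laxM hcw, add_zero, map_sum]
  exact Finset.sum_congr rfl fun i _ => (ham_const_mul _ _ _ _ _ _ fun a => hdw a i).symm

end LaxPair

/-! ### Euler derivations and the operators `∂_i^{(p)}` -/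

/-- A derivation of the field of rational functions is determined by its values on the
coordinates. -/
lemma derivation_eq_zero {N : ℕ} (D : Derivation ℂ (Fld N) (Fld N))
    (h : ∀ i, D (xv i) = 0) (v : Fld N) : D v = 0 := by
  have hpoly : ∀ P : MvPolynomial (Fin N) ℂ, D (algebraMap _ (Fld N) P) = 0 := by
    intro P
    induction P using MvPolynomial.induction_on with
    | C a => exact D.map_algebraMap a
    | add P Q hP hQ => rw [map_add, map_add, hP, hQ, add_zero]
    | mul_X P i hP =>
      rw [map_mul, Derivation.leibniz, hP]
      have : D (algebraMap _ (Fld N) (MvPolynomial.X i)) = 0 := h i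
      rw [this]; simp
  obtain ⟨P, Q, hPQ⟩ : ∃ P Q : MvPolynomial (Fin N) ℂ,
      algebraMap _ (Fld N) P / algebraMap _ (Fld N) Q = v := by
    obtain ⟨P, Q, _, h⟩ := IsFractionRing.div_surjective (A := MvPolynomial (Fin N) ℂ)
      (K := FractionRing (MvPolynomial (Fin N) ℂ)) v
    exact ⟨P, Q, h⟩
  rw [← hPQ, Derivation.leibniz_div, hpoly, hpoly]
  simp

lemma xv_injective {N : ℕ} : Function.Injective (xv : Fin N → Fld N) := by
  intro i j h
  exact MvPolynomial.X_injective
    (IsFractionRing.injective (MvPolynomial (Fin N) ℂ) (FractionRing (MvPolynomial (Fin N) ℂ)) h)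

/-- An Euler family, bundled as derivations. -/
def eulerDer {N : ℕ} (Deul : Fin N → EndF N) (hD : IsEulerFamily Deul) (i : Fin N) :
    Derivation ℂ (Fld N) (Fld N) :=
  Derivation.mk' (Deul i) fun f g => by
    rw [hD.1 i f g, smul_eq_mul, smul_eq_mul, mul_comm g]

lemma eulerDer_apply {N : ℕ} (Deul : Fin N → EndF N) (hD : IsEulerFamily Deul) (i : Fin N)
    (v : Fld N) : eulerDer Deul hD i v = Deul i v := rfl

lemma eulerDer_comm {N : ℕ} (Deul : Fin N → EndF N) (hD : IsEulerFamily Deul) (i j : Fin N)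
    (v : Fld N) : eulerDer Deul hD i (eulerDer Deul hD j v) =
      eulerDer Deul hD j (eulerDer Deul hD i v) := by
  have h := derivation_eq_zero ⁅eulerDer Deul hD i, eulerDer Deul hD j⁆ (fun l => by
    rw [Derivation.commutator_apply]
    simp only [eulerDer_apply, hD.2, apply_ite (Deul _), map_zero]
    split_ifs <;> simp) v
  rw [Derivation.commutator_apply] at h
  exact sub_eq_zero.1 h

/-- The recursion for `∂_i^{(p)}` is the iteration of the Moser matrix on a constant vector. -/
lemma Dpow_eq (n : ℕ) (k : ℂ) {N : ℕ} (Deul : Fin N → EndF N) (hD : IsEulerFamily Deul)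
    (p : ℕ) (i : Fin N) (v : Fld N) :
    Dpow n k Deul (p + 1) i v =
      ((laxL xv (eulerDer Deul hD) (fun i => algebraMap ℂ (Fld N) (k ^ par n i))
        (fun i => algebraMap ℂ (Fld N) (k ^ (1 - par n i))))^[p + 1] fun _ => v) i := by
  induction p generalizing i with
  | zero =>
    change (k ^ par n i) • Deul i v = _
    rw [Algebra.smul_def]
    simp [laxL, eulerDer_apply]
  | succ p ih =>
    rw [Function.iterate_succ_apply']
    have h : Dpow n k Deul (p + 1 + 1) i v = (k ^ par n i) • Deul i (Dpow n k Deul (p + 1) i v)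
        - ∑ j ∈ Finset.univ.erase i, (k ^ (1 - par n j)) •
          ((xv i / (xv i - xv j)) * (Dpow n k Deul (p+1) i v - Dpow n k Deul (p+1) j v)) := by
      simp [Dpow, mulOp, LinearMap.sum_apply]
    rw [h]
    simp only [ih]
    conv_rhs => unfold laxL
    rw [← Finset.add_sum_erase _ _ (Finset.mem_univ i)]
    simp only [Algebra.smul_def, eulerDer_apply, fF, sub_self, mul_zero, zero_add]
    rfl

lemma Ltot_eq (n : ℕ) (k : ℂ) {N : ℕ} (Deul : Fin N → EndF N) (hD : IsEulerFamily Deul)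
    (p : ℕ) (v : Fld N) :
    Ltot n k Deul (p + 1) v = ∑ i, algebraMap ℂ (Fld N) (k⁻¹ ^ par n i) *
      ((laxL xv (eulerDer Deul hD) (fun i => algebraMap ℂ (Fld N) (k ^ par n i))
        (fun i => algebraMap ℂ (Fld N) (k ^ (1 - par n i))))^[p + 1] fun _ => v) i := by
  simp only [Ltot, LinearMap.sum_apply, LinearMap.smul_apply, Dpow_eq n k Deul hD]
  exact Finset.sum_congr rfl fun i _ => Algebra.smul_def _ _

/-- For every integer `p ≥ 1`, the deformed CMS integral `L_p` commutes with
`L_2`: `[L_p, L_2] = 0` as `ℂ`-linear operators on `F = ℂ(x₁,…,x_{n+m})`. -/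
theorem deformed_CMS_integral_commutes_with_L2
    (n m : ℕ) (hn : 1 ≤ n) (hm : 1 ≤ m) (k : ℂ) (hk : k ≠ 0)
    (Deul : Fin (n + m) → EndF (n + m)) (hD : IsEulerFamily Deul)
    (p : ℕ) (hp : 1 ≤ p) :
    Ltot n k Deul p ∘ₗ Ltot n k Deul 2 - Ltot n k Deul 2 ∘ₗ Ltot n k Deul p = 0 := by
  obtain ⟨r, rfl⟩ : ∃ r, p = r + 1 := ⟨p - 1, by omega⟩
  have hpar : ∀ i : Fin (n + m), par n i = 0 ∨ par n i = 1 := fun i => by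
    unfold par; split_ifs <;> simp
  have hq : ∀ i : Fin (n + m), algebraMap ℂ (Fld (n + m)) (k ^ par n i) *
      algebraMap ℂ (Fld (n + m)) (k ^ (1 - par n i)) = algebraMap ℂ (Fld (n + m)) k := fun i => by
    rcases hpar i with h | h <;> simp [h]
  have hs : ∀ i : Fin (n + m), algebraMap ℂ (Fld (n + m)) (k ^ par n i) +
      algebraMap ℂ (Fld (n + m)) (k ^ (1 - par n i)) = 1 + algebraMap ℂ (Fld (n + m)) k :=
    fun i => by rcases hpar i with h | h <;> simp [h, add_comm]
  have hw : ∀ i : Fin (n + m), algebraMap ℂ (Fld (n + m)) (k⁻¹ ^ par n i) *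
      algebraMap ℂ (Fld (n + m)) (k ^ par n i) = 1 := fun i => by
    rw [← map_mul, ← mul_pow, inv_mul_cancel₀ hk, one_pow, map_one]
  have hconst : ∀ (a : Fin (n + m)) (z : ℂ),
      eulerDer Deul hD a (algebraMap ℂ (Fld (n + m)) z) = 0 := fun a z =>
    (eulerDer Deul hD a).map_algebraMap z
  have h2 : ∀ v, Ltot n k Deul 2 v = ham xv (eulerDer Deul hD)
      (fun i => algebraMap ℂ (Fld (n + m)) (k ^ par n i))
      (fun i => algebraMap ℂ (Fld (n + m)) (k ^ (1 - par n i))) v := fun v => by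
    rw [Ltot_eq n k Deul hD 1, ← ham_eq (fun a i => hconst a _) hq hw v]
    rfl
  ext v
  rw [LinearMap.sub_apply, LinearMap.comp_apply, LinearMap.comp_apply, h2, h2,
    Ltot_eq n k Deul hD r, Ltot_eq n k Deul hD r,
    commute_ham xv_injective hD.2 (eulerDer_comm Deul hD) (fun a i => hconst a _)
      (fun a i => hconst a _) (fun a i => hconst a _) hq hs hw, sub_self,
    LinearMap.zero_apply]
end
end

section
/- Let (A,B) ∈ 𝒯 with A ∩ B = ∅. Then the equivalence class of (A,B) in 𝒯 under ∼ is finite and contains exactly 2^s elements, where s = |A ∩ (B−1)|. -/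
/-!
Write `U = B ∪ (B−1)`, a disjoint union of dominoes `{b−1, b}`, and `I = A ∩ (B−1)`, which equals
`A ∩ U` because `A ∩ B = ∅`. For `a ∈ I` let `φ a` be the least integer `> a` outside `U`
(`next B a` below).

* The dominoes starting at `a` tile `[a, φ a)` (`tile_run`), so `φ a ≡ a (mod 2)`. The alternating
  parity of `A` together with `A ∩ B = ∅` forces that `A` has no element in `(a, φ a]`
  (`not_mem_A`). Hence the points `a` and `φ a`, for `a ∈ I`, are `2|I|` distinct integers.
* For every `S ⊆ I`, replacing each `a ∈ S` by `φ a` and shifting the dominoes of `[a, φ a)` one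
  step to the right gives an equivalent element of `𝒯` (`moved_mem_class`); distinct `S` give
  distinct pairs.
* Conversely, let `(Ã, B̃)` be equivalent to `(A, B)`, with `Ũ = B̃ ∪ (B̃−1)`. For `a ∈ I` the
  interval `(a, φ a)` has odd length and lies in `U ∖ A ⊆ Ũ`, so it cannot be a union of dominoes
  and `Ũ` contains `a` or `φ a`; that point then lies in `Ã ∩ Ũ`. As `|Ã ∩ Ũ| = |I|`, the set
  `Ã ∩ Ũ` contains exactly one point of each pair `{a, φ a}` and nothing else. So `Ã` and `Ũ` come
  from the move with `S = I ∖ Ã`, and `Ũ` determines `B̃` (`tiling_unique`).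

Therefore the class is in bijection with the subsets of `I`.
-/

/-- The set `𝒯`: pairs `(A, B)` of finite subsets of `ℤ` with `|A| = n`, `|B| = m`, such that
any two elements of `A` adjacent in the natural order of `ℤ` differ by an odd integer, and
`B ∩ (B−1) = ∅`. -/
def TTmem (n m : ℕ) (A B : Finset ℤ) : Prop :=
  A.card = n ∧ B.card = m ∧
  (∀ a ∈ A, ∀ a' ∈ A, a < a' → (∀ c ∈ A, ¬(a < c ∧ c < a')) → Odd (a' - a)) ∧
  B ∩ B.image (· - 1) = ∅

/-- The equivalence relation `∼` on `𝒯`: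
`A ∖ (B ∪ (B−1)) = Ã ∖ (B̃ ∪ (B̃−1))` and `(B ∪ (B−1)) ∖ A = (B̃ ∪ (B̃−1)) ∖ Ã`. -/
def TTequiv (A B At Bt : Finset ℤ) : Prop :=
  A \ (B ∪ B.image (· - 1)) = At \ (Bt ∪ Bt.image (· - 1)) ∧
  (B ∪ B.image (· - 1)) \ A = (Bt ∪ Bt.image (· - 1)) \ At

namespace TTclass

/-! ### Tilings by dominoes -/

/-- The set `B ∪ (B−1)` covered by the dominoes `{b−1, b}`, `b ∈ B`. -/
def cover (B : Finset ℤ) : Finset ℤ := B ∪ B.image (· - 1)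

lemma mem_image_pred {B : Finset ℤ} {x : ℤ} : x ∈ B.image (· - 1) ↔ x + 1 ∈ B := by
  simp only [Finset.mem_image]
  constructor
  · rintro ⟨b, hb, rfl⟩
    simpa using hb
  · intro h
    exact ⟨x + 1, h, by ring⟩

lemma mem_cover {B : Finset ℤ} {x : ℤ} : x ∈ cover B ↔ x ∈ B ∨ x + 1 ∈ B := by
  rw [cover, Finset.mem_union, mem_image_pred]

lemma disjoint_iff {B : Finset ℤ} :
    B ∩ B.image (· - 1) = ∅ ↔ ∀ b ∈ B, b + 1 ∉ B := by
  rw [← Finset.disjoint_iff_inter_eq_empty, Finset.disjoint_left]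
  simp only [mem_image_pred]

/-- If a domino starts at `c` and `(c, d)` is covered, then dominoes start at every point of
`[c, d)` congruent to `c` modulo `2`. -/
lemma tile_run {B : Finset ℤ} (hB : ∀ b ∈ B, b + 1 ∉ B) {c d : ℤ} (hc : c + 1 ∈ B)
    (hcov : ∀ x, c < x → x < d → x ∈ cover B) (x : ℤ) (hcx : c ≤ x) (hxd : x < d)
    (hpar : (x - c) % 2 = 0) : x + 1 ∈ B := by
  have key : ∀ k : ℕ, c + 2 * k < d → c + 2 * k + 1 ∈ B := by
    intro k
    induction k with
    | zero => intro _; simpa using hc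
    | succ k ih =>
      intro h
      push_cast at h ⊢
      have h1 := ih (by omega)
      rcases mem_cover.1 (hcov (c + 2 * (k + 1)) (by omega) h) with h2 | h2
      · exact absurd (by convert h2 using 1; ring) (hB _ h1)
      · exact h2
  have := key ((x - c) / 2).toNat (by omega)
  convert this using 1
  omega

/-- A disjoint union of dominoes can be tiled by dominoes in only one way: if two tilings of the
same set differ, a domino of the first one that is not in the second forces another one two steps
to its left, which is impossible in a finite set. -/
lemma tiling_unique {B C : Finset ℤ} (hB : ∀ b ∈ B, b + 1 ∉ B) (hC : ∀ b ∈ C, b + 1 ∉ C)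
    (h : cover B = cover C) : B = C := by
  have step : ∀ {B C : Finset ℤ}, (∀ b ∈ B, b + 1 ∉ B) → cover B = cover C →
      ∀ b ∈ B, b ∉ C → b - 1 ∈ C ∧ b - 1 ∉ B := by
    intro B C hB h b hb hbC
    have h1 : b - 1 ∈ cover C := by
      rw [← h, mem_cover]; right; simpa using hb
    refine ⟨?_, fun h2 => hB _ h2 (by simpa using hb)⟩
    rcases mem_cover.1 h1 with h2 | h2
    · exact h2
    · exact absurd (by simpa using h2) hbC
  have sub : ∀ {B C : Finset ℤ}, (∀ b ∈ B, b + 1 ∉ B) → (∀ b ∈ C, b + 1 ∉ C) →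
      cover B = cover C → B ⊆ C := by
    intro B C hB hC h
    rw [← Finset.sdiff_eq_empty_iff_subset]
    by_contra hne
    obtain ⟨b, hb, hmin⟩ :=
      Finset.exists_min_image (B \ C) id (Finset.nonempty_iff_ne_empty.2 hne)
    rw [Finset.mem_sdiff] at hb
    obtain ⟨h1, h2⟩ := step hB h b hb.1 hb.2
    obtain ⟨h3, h4⟩ := step hC h.symm _ h1 h2
    have := hmin _ (Finset.mem_sdiff.2 ⟨h3, h4⟩)
    simp only [id] at this
    omega
  exact (sub hB hC h).antisymm (sub hC hB h.symm)

/-! ### The first free position to the right -/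

lemma exists_next (B : Finset ℤ) (a : ℤ) :
    ∃ d, a < d ∧ d ∉ cover B ∧ ∀ x, a < x → x < d → x ∈ cover B := by
  have hex : ∃ k : ℕ, a + 1 + k ∉ cover B := by
    by_contra! hall
    refine (Set.infinite_of_injective_forall_mem (f := fun k : ℕ => a + 1 + (k : ℤ)) ?_ hall)
      (cover B).finite_toSet
    intro x y hxy
    simpa using hxy
  classical
  refine ⟨a + 1 + Nat.find hex, by omega, Nat.find_spec hex, fun x h1 h2 => ?_⟩
  have := Nat.find_min hex (m := (x - a - 1).toNat) (by omega)
  rw [not_not] at this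
  convert this using 1
  omega

/-- The least integer `> a` that is not covered by the dominoes of `B`. -/
noncomputable def next (B : Finset ℤ) (a : ℤ) : ℤ := (exists_next B a).choose

lemma lt_next (B : Finset ℤ) (a : ℤ) : a < next B a := (exists_next B a).choose_spec.1

lemma next_not_mem (B : Finset ℤ) (a : ℤ) : next B a ∉ cover B :=
  (exists_next B a).choose_spec.2.1

lemma mem_of_lt_next {B : Finset ℤ} {a x : ℤ} (h1 : a < x) (h2 : x < next B a) : x ∈ cover B :=
  (exists_next B a).choose_spec.2.2 x h1 h2

lemma next_parity {B : Finset ℤ} (hB : ∀ b ∈ B, b + 1 ∉ B) {a : ℤ} (ha : a + 1 ∈ B) :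
    (next B a - a) % 2 = 0 := by
  by_contra h
  have h0 := lt_next B a
  have := tile_run hB ha (fun x => mem_of_lt_next) (next B a - 1) (by omega) (by omega) (by omega)
  exact next_not_mem B a (mem_cover.2 (Or.inl (by simpa using this)))

lemma mem_B_of_odd {B : Finset ℤ} (hB : ∀ b ∈ B, b + 1 ∉ B) {a : ℤ} (ha : a + 1 ∈ B)
    {x : ℤ} (h1 : a < x) (h2 : x < next B a) (hp : (x - a) % 2 = 1) : x ∈ B := by
  have := tile_run hB ha (fun x => mem_of_lt_next) (x - 1) (by omega) (by omega) (by omega)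
  simpa using this

/-- `A` does not meet `(a, next B a]`: its first element after `a` is at odd distance from `a`, so
it would be a point of `B`. -/
lemma not_mem_A {A B : Finset ℤ} (hB : ∀ b ∈ B, b + 1 ∉ B)
    (hA : ∀ a ∈ A, ∀ a' ∈ A, a < a' → (∀ c ∈ A, ¬(a < c ∧ c < a')) → Odd (a' - a))
    (hd : ∀ a ∈ A, a ∉ B) {a : ℤ} (haA : a ∈ A) (ha : a + 1 ∈ B)
    {x : ℤ} (h1 : a < x) (h2 : x ≤ next B a) : x ∉ A := by
  intro hx
  obtain ⟨c, hc, hmin⟩ := Finset.exists_min_image (A.filter (a < ·)) id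
    ⟨x, Finset.mem_filter.2 ⟨hx, h1⟩⟩
  rw [Finset.mem_filter] at hc
  simp only [id, Finset.mem_filter, and_imp] at hmin
  have hodd := hA a haA c hc.1 hc.2 (fun e he h => by have := hmin e he h.1; omega)
  have hcx := hmin x hx h1
  have hp := next_parity hB ha
  rw [Int.odd_iff] at hodd
  exact hd c hc.1 (mem_B_of_odd hB ha hc.2 (by omega) hodd)

/-! ### The moves -/

/-- The set obtained from `A` by moving every `a ∈ S` to `next B a`. -/
noncomputable def moveA (A B S : Finset ℤ) : Finset ℤ :=
  A.image (fun a => if a ∈ S then next B a else a)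

open Classical in
/-- The set obtained from `B` by shifting to the right, for every `a ∈ S`, all dominoes contained
in `[a, next B a)`. -/
noncomputable def moveB (B S : Finset ℤ) : Finset ℤ :=
  B.image (fun b => if ∃ a ∈ S, a < b ∧ b < next B a then b + 1 else b)

lemma mem_moveA {A B S : Finset ℤ} (hS : S ⊆ A) {x : ℤ} :
    x ∈ moveA A B S ↔ (x ∈ A ∧ x ∉ S) ∨ ∃ a ∈ S, next B a = x := by
  simp only [moveA, Finset.mem_image]
  constructor
  · rintro ⟨a, ha, h⟩
    split_ifs at h with hs
    · exact Or.inr ⟨a, hs, h⟩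
    · subst h; exact Or.inl ⟨ha, hs⟩
  · rintro (⟨h1, h2⟩ | ⟨a, ha, h⟩)
    · exact ⟨x, h1, if_neg h2⟩
    · exact ⟨a, hS ha, by rw [if_pos ha]; exact h⟩

/-! ### Properties of the moved pair -/

/-- The moved dominoes cover `(U ∖ S) ∪ {next B a : a ∈ S}`, where `U` is the set covered by `B`. -/
lemma mem_cover_moveB {A B S : Finset ℤ} (hB : ∀ b ∈ B, b + 1 ∉ B)
    (hA : ∀ a ∈ A, ∀ a' ∈ A, a < a' → (∀ c ∈ A, ¬(a < c ∧ c < a')) → Odd (a' - a))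
    (hd : ∀ a ∈ A, a ∉ B) (hS : ∀ a ∈ S, a ∈ A ∧ a + 1 ∈ B) {x : ℤ} :
    x ∈ cover (moveB B S) ↔ (x ∈ cover B ∧ x ∉ S) ∨ ∃ a ∈ S, next B a = x := by
  have hmem : ∀ y, y ∈ moveB B S ↔
      (∃ a ∈ S, a < y - 1 ∧ y - 1 < next B a ∧ y - 1 ∈ B) ∨
      (y ∈ B ∧ ∀ a ∈ S, a < y → next B a ≤ y) := by
    intro y
    simp only [moveB, Finset.mem_image]
    constructor
    · rintro ⟨b, hb, h⟩
      split_ifs at h with hs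
      · obtain ⟨a, ha, h1, h2⟩ := hs
        left
        subst h
        exact ⟨a, ha, by omega, by omega, by simpa using hb⟩
      · subst h
        push Not at hs
        exact Or.inr ⟨hb, hs⟩
    · rintro (⟨a, ha, h1, h2, h3⟩ | ⟨h1, h2⟩)
      · exact ⟨y - 1, h3, by rw [if_pos ⟨a, ha, h1, h2⟩]; ring⟩
      · refine ⟨y, h1, if_neg ?_⟩
        push Not
        exact h2
  have hSB : ∀ b ∈ B, b ∉ S := fun b hb hs => hd b (hS b hs).1 hb
  rw [mem_cover, hmem, hmem]
  simp only [add_sub_cancel_right]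
  constructor
  · rintro ((⟨a, ha, h1, h2, h3⟩ | ⟨h1, h2⟩) | (⟨a, ha, h1, h2, h3⟩ | ⟨h1, h2⟩))
    · rcases eq_or_ne (next B a) x with h | h
      · exact Or.inr ⟨a, ha, h⟩
      · left
        refine ⟨mem_of_lt_next (a := a) (by omega) (by omega), fun hs => ?_⟩
        exact not_mem_A hB hA hd (hS a ha).1 (hS a ha).2 (x := x) (by omega) (by omega) (hS x hs).1
    · exact Or.inl ⟨mem_cover.2 (Or.inl h1), hSB x h1⟩
    · exact Or.inl ⟨mem_cover.2 (Or.inl h3), hSB x h3⟩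
    · refine Or.inl ⟨mem_cover.2 (Or.inr h1), fun hs => ?_⟩
      have h3 := h2 x hs (by omega)
      have h4 := lt_next B x
      have h5 := next_parity hB (hS x hs).2
      omega
  · rintro (⟨h1, h2⟩ | ⟨a, ha, rfl⟩)
    · rcases mem_cover.1 h1 with h3 | h3
      · by_cases hs : ∀ a ∈ S, a < x → next B a ≤ x
        · exact Or.inl (Or.inr ⟨h3, hs⟩)
        · push Not at hs
          obtain ⟨a, ha, h4, h5⟩ := hs
          exact Or.inr (Or.inl ⟨a, ha, h4, h5, h3⟩)
      · by_cases hs : ∀ a ∈ S, a < x + 1 → next B a ≤ x + 1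
        · exact Or.inr (Or.inr ⟨h3, hs⟩)
        · push Not at hs
          obtain ⟨a, ha, h4, h5⟩ := hs
          have hax : a ≠ x := fun h => h2 (h ▸ ha)
          -- `x` is the left cell of a shifted domino, hence the right cell of the shifted
          -- predecessor of that domino.
          have hp : (x - a) % 2 = 0 := by
            by_contra hp
            exact hB x (mem_B_of_odd hB (hS a ha).2 (by omega) (by omega) (by omega)) h3
          exact Or.inl (Or.inl ⟨a, ha, by omega, by omega,
            mem_B_of_odd hB (hS a ha).2 (by omega) (by omega) (by omega)⟩)
    · have h4 := lt_next B a
      have h5 := next_parity hB (hS a ha).2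
      exact Or.inl (Or.inl ⟨a, ha, by omega, by omega,
        mem_B_of_odd hB (hS a ha).2 (by omega) (by omega) (by omega)⟩)

lemma moveB_disjoint {A B S : Finset ℤ} (hB : ∀ b ∈ B, b + 1 ∉ B)
    (hS : ∀ a ∈ S, a ∈ A ∧ a + 1 ∈ B) : ∀ b ∈ moveB B S, b + 1 ∉ moveB B S := by
  intro y hy hy'
  simp only [moveB, Finset.mem_image] at hy hy'
  obtain ⟨b, hb, h⟩ := hy
  obtain ⟨b', hb', h'⟩ := hy'
  have h1 : b' ≠ b + 1 := fun e => hB b hb (e ▸ hb')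
  have h2 : b ≠ b' + 1 := fun e => hB b' hb' (e ▸ hb)
  split_ifs at h h' with hs hs' hs'
  · omega
  · -- the domino of `b` is shifted and the adjacent one of `b' = b + 2` is not
    obtain ⟨a, ha, h3, h4⟩ := hs
    refine hs' ⟨a, ha, by omega, ?_⟩
    have h5 := next_parity hB (hS a ha).2
    have h6 : (b - a) % 2 = 1 := by
      by_contra hp
      have := tile_run hB (hS a ha).2 (fun x => mem_of_lt_next) b (by omega) (by omega) (by omega)
      exact hB b hb this
    have h7 : next B a ≠ b + 1 := fun e =>
      next_not_mem B a (mem_cover.2 (Or.inr (by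
        rw [e, show b + 1 + 1 = b' by omega]; exact hb')))
    omega
  · obtain rfl : b' = b := by omega
    exact hs hs'
  · omega

lemma moveB_card {B S : Finset ℤ} (hB : ∀ b ∈ B, b + 1 ∉ B) : (moveB B S).card = B.card := by
  refine Finset.card_image_of_injOn ?_
  intro b hb b' hb' h
  rw [Finset.mem_coe] at hb hb'
  have h1 : b' ≠ b + 1 := fun e => hB b hb (e ▸ hb')
  have h2 : b ≠ b' + 1 := fun e => hB b' hb' (e ▸ hb)
  dsimp only at h
  split_ifs at h <;> omega

lemma moveA_strictMono {A B S : Finset ℤ} (hB : ∀ b ∈ B, b + 1 ∉ B)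
    (hA : ∀ a ∈ A, ∀ a' ∈ A, a < a' → (∀ c ∈ A, ¬(a < c ∧ c < a')) → Odd (a' - a))
    (hd : ∀ a ∈ A, a ∉ B) (hS : ∀ a ∈ S, a ∈ A ∧ a + 1 ∈ B) :
    ∀ a ∈ A, ∀ a' ∈ A, a < a' →
    (if a ∈ S then next B a else a) < (if a' ∈ S then next B a' else a') := by
  intro a ha a' ha' h
  have h1 : (if a ∈ S then next B a else a) < a' := by
    split_ifs with hs
    · by_contra hlt
      exact not_mem_A hB hA hd ha (hS a hs).2 h (by omega) ha'
    · exact h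
  have h2 : a' ≤ (if a' ∈ S then next B a' else a') := by
    split_ifs
    · exact (lt_next B a').le
    · exact le_rfl
  omega

lemma moveA_card {A B S : Finset ℤ} (hB : ∀ b ∈ B, b + 1 ∉ B)
    (hA : ∀ a ∈ A, ∀ a' ∈ A, a < a' → (∀ c ∈ A, ¬(a < c ∧ c < a')) → Odd (a' - a))
    (hd : ∀ a ∈ A, a ∉ B) (hS : ∀ a ∈ S, a ∈ A ∧ a + 1 ∈ B) :
    (moveA A B S).card = A.card := by
  refine Finset.card_image_of_injOn ?_
  intro a ha a' ha' h
  rcases lt_trichotomy a a' with hlt | rfl | hlt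
  · exact absurd h (moveA_strictMono hB hA hd hS a ha a' ha' hlt).ne
  · rfl
  · exact absurd h (moveA_strictMono hB hA hd hS a' ha' a ha hlt).ne'

lemma moveA_odd {A B S : Finset ℤ} (hB : ∀ b ∈ B, b + 1 ∉ B)
    (hA : ∀ a ∈ A, ∀ a' ∈ A, a < a' → (∀ c ∈ A, ¬(a < c ∧ c < a')) → Odd (a' - a))
    (hd : ∀ a ∈ A, a ∉ B) (hS : ∀ a ∈ S, a ∈ A ∧ a + 1 ∈ B) :
    ∀ a ∈ moveA A B S, ∀ a' ∈ moveA A B S, a < a' →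
    (∀ c ∈ moveA A B S, ¬(a < c ∧ c < a')) → Odd (a' - a) := by
  -- moving is increasing and preserves parity, so adjacency and odd gaps carry over
  intro y hy y' hy' hlt hadj
  have mono := moveA_strictMono hB hA hd hS
  have par : ∀ a ∈ A, ((if a ∈ S then next B a else a) - a) % 2 = 0 := by
    intro a _
    split_ifs with hs
    · exact next_parity hB (hS a hs).2
    · simp
  simp only [moveA, Finset.mem_image] at hy hy'
  obtain ⟨a, ha, rfl⟩ := hy
  obtain ⟨a', ha', rfl⟩ := hy'
  have haa : a < a' := by
    by_contra h
    rcases (not_lt.1 h).lt_or_eq with h | h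
    · exact absurd (mono a' ha' a ha h) (not_lt.2 hlt.le)
    · subst h; exact lt_irrefl _ hlt
  have := hA a ha a' ha' haa (fun c hc h => hadj _ (Finset.mem_image_of_mem _ hc)
    ⟨mono a ha c hc h.1, mono c hc a' ha' h.2⟩)
  rw [Int.odd_iff] at this ⊢
  have p1 := par a ha
  have p2 := par a' ha'
  omega

/-- The moved pair belongs to `𝒯` and is equivalent to the original one. -/
lemma moved_mem_class {n m : ℕ} {A B S : Finset ℤ} (hB : ∀ b ∈ B, b + 1 ∉ B)
    (hA : ∀ a ∈ A, ∀ a' ∈ A, a < a' → (∀ c ∈ A, ¬(a < c ∧ c < a')) → Odd (a' - a))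
    (hd : ∀ a ∈ A, a ∉ B) (hS : ∀ a ∈ S, a ∈ A ∧ a + 1 ∈ B)
    (hn : A.card = n) (hm : B.card = m) :
    TTmem n m (moveA A B S) (moveB B S) ∧ TTequiv A B (moveA A B S) (moveB B S) := by
  have hSA : S ⊆ A := fun a ha => (hS a ha).1
  refine ⟨⟨(moveA_card hB hA hd hS).trans hn, (moveB_card hB).trans hm,
    moveA_odd hB hA hd hS, disjoint_iff.2 (moveB_disjoint hB hS)⟩, ?_⟩
  change A \ cover B = moveA A B S \ cover (moveB B S) ∧
    cover B \ A = cover (moveB B S) \ moveA A B S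
  have hnA : ∀ a ∈ S, next B a ∉ A := fun a ha =>
    not_mem_A hB hA hd (hS a ha).1 (hS a ha).2 (lt_next B a) le_rfl
  have hScov : ∀ a ∈ S, a ∈ cover B := fun a ha => mem_cover.2 (Or.inr (hS a ha).2)
  constructor
  · ext x
    rw [Finset.mem_sdiff, Finset.mem_sdiff, mem_moveA hSA, mem_cover_moveB hB hA hd hS]
    have h1 : (∃ a ∈ S, next B a = x) → x ∉ A := by
      rintro ⟨a, ha, rfl⟩; exact hnA a ha
    have h3 := hScov x
    generalize (∃ a ∈ S, next B a = x) = E at *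
    tauto
  · ext x
    rw [Finset.mem_sdiff, Finset.mem_sdiff, mem_moveA hSA, mem_cover_moveB hB hA hd hS]
    have h2 : (∃ a ∈ S, next B a = x) → x ∉ cover B := by
      rintro ⟨a, ha, rfl⟩; exact next_not_mem B a
    have h3 : x ∈ S → x ∈ A := fun h => hSA h
    generalize (∃ a ∈ S, next B a = x) = E at *
    tauto

/-! ### Every equivalent pair is a moved pair -/

/-- Every pair equivalent to `(A, B)` is obtained by moving `I ∖ Ã`, where `I = A ∩ (B−1)`. -/
lemma eq_moved {n m : ℕ} {A B At Bt : Finset ℤ} (hAB : TTmem n m A B)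
    (hd : ∀ a ∈ A, a ∉ B) (ht : TTmem n m At Bt) (he : TTequiv A B At Bt) :
    At = moveA A B ((A ∩ B.image (· - 1)) \ At) ∧
      Bt = moveB B ((A ∩ B.image (· - 1)) \ At) := by
  obtain ⟨hn, hm, hA, hB⟩ := hAB
  obtain ⟨hn', hm', hA', hB'⟩ := ht
  rw [disjoint_iff] at hB hB'
  obtain ⟨hX, hY⟩ := he
  change A \ cover B = At \ cover Bt at hX
  change cover B \ A = cover Bt \ At at hY
  set I := A ∩ B.image (· - 1) with hI
  have hIm : ∀ a, a ∈ I ↔ a ∈ A ∧ a + 1 ∈ B := by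
    intro a; rw [hI, Finset.mem_inter, mem_image_pred]
  have hIU : A ∩ cover B = I := by
    ext x
    rw [hIm, Finset.mem_inter, mem_cover]
    have := hd x
    tauto
  have hS : ∀ a ∈ I \ At, a ∈ A ∧ a + 1 ∈ B := fun a ha => (hIm a).1 (Finset.mem_sdiff.1 ha).1
  have X' : ∀ x, (x ∈ A ∧ x ∉ cover B) ↔ (x ∈ At ∧ x ∉ cover Bt) := by
    intro x; rw [← Finset.mem_sdiff, ← Finset.mem_sdiff, hX]
  have Y' : ∀ x, (x ∈ cover B ∧ x ∉ A) ↔ (x ∈ cover Bt ∧ x ∉ At) := by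
    intro x; rw [← Finset.mem_sdiff, ← Finset.mem_sdiff, hY]
  have hcard : (At ∩ cover Bt).card = I.card := by
    have h1 := Finset.card_inter_add_card_sdiff A (cover B)
    have h2 := Finset.card_inter_add_card_sdiff At (cover Bt)
    rw [hIU, hX] at h1
    omega
  have hnA : ∀ a ∈ I \ At, next B a ∉ A := fun a ha =>
    not_mem_A hB hA hd (hS a ha).1 (hS a ha).2 (lt_next B a) le_rfl
  -- if `a` is not covered by `B̃`, then the odd interval `(a, next B a)` forces `next B a` to be
  have hnext : ∀ a ∈ I \ At, next B a ∈ cover Bt := by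
    intro a ha
    by_contra hcon
    have hcov : ∀ x, a < x → x < next B a → x ∈ cover Bt := fun x h1 h2 =>
      ((Y' x).1 ⟨mem_of_lt_next h1 h2,
        not_mem_A hB hA hd (hS a ha).1 (hS a ha).2 h1 h2.le⟩).1
    have hat : a ∉ cover Bt := fun h =>
      ((Y' a).2 ⟨h, (Finset.mem_sdiff.1 ha).2⟩).2 (hS a ha).1
    have h4 := lt_next B a
    have h5 := next_parity hB (hS a ha).2
    have h6 : a + 1 + 1 ∈ Bt := by
      rcases mem_cover.1 (hcov (a + 1) (by omega) (by omega)) with h | h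
      · exact absurd (mem_cover.2 (Or.inr h)) hat
      · exact h
    have h7 := tile_run hB' h6 (d := next B a) (fun x h1 h2 => hcov x (by omega) h2)
      (next B a - 1) (by omega) (by omega) (by omega)
    exact hcon (mem_cover.2 (Or.inl (by simpa using h7)))
  have hinj : Set.InjOn (next B) (I \ At : Finset ℤ) := by
    have key : ∀ a ∈ I \ At, ∀ a' ∈ I \ At, a < a' → next B a ≠ next B a' := by
      intro a ha a' ha' h e
      have := lt_next B a'
      exact not_mem_A hB hA hd (hS a ha).1 (hS a ha).2 h (by omega) (hS a' ha').1
    intro a ha a' ha' h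
    rcases lt_trichotomy a a' with hlt | heq | hlt
    · exact absurd h (key a ha a' ha' hlt)
    · exact heq
    · exact absurd h.symm (key a' ha' a ha hlt)
  -- the `|I|` points found so far exhaust `Ã ∩ Ũ`
  have hJ : (I ∩ At) ∪ (I \ At).image (next B) = At ∩ cover Bt := by
    refine Finset.eq_of_subset_of_card_le ?_ ?_
    · intro x hx
      rw [Finset.mem_union, Finset.mem_image] at hx
      rw [Finset.mem_inter]
      rcases hx with hx | ⟨a, ha, rfl⟩
      · rw [Finset.mem_inter] at hx
        refine ⟨hx.2, ?_⟩
        by_contra h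
        exact ((X' x).2 ⟨hx.2, h⟩).2 (mem_cover.2 (Or.inr ((hIm x).1 hx.1).2))
      · refine ⟨?_, hnext a ha⟩
        by_contra h
        exact next_not_mem B a ((Y' _).2 ⟨hnext a ha, h⟩).1
    · rw [hcard, Finset.card_union_of_disjoint, Finset.card_image_of_injOn hinj,
        Finset.card_inter_add_card_sdiff]
      rw [Finset.disjoint_right]
      intro x hx hx'
      obtain ⟨a, ha, rfl⟩ := Finset.mem_image.1 hx
      exact hnA a ha ((hIm _).1 (Finset.mem_inter.1 hx').1).1
  have J' : ∀ x, (x ∈ At ∧ x ∈ cover Bt) ↔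
      ((x ∈ I ∧ x ∈ At) ∨ ∃ a ∈ I \ At, next B a = x) := by
    intro x
    rw [← Finset.mem_inter, ← hJ, Finset.mem_union, Finset.mem_inter, Finset.mem_image]
  have I' : ∀ x, x ∈ I ↔ x ∈ A ∧ x ∈ cover B := by
    intro x; rw [← hIU, Finset.mem_inter]
  refine ⟨?_, tiling_unique hB' (moveB_disjoint hB hS) ?_⟩
  · ext x
    rw [mem_moveA (fun a ha => (hS a ha).1), Finset.mem_sdiff]
    have h1 := X' x
    have h2 := J' x
    have h3 := I' x
    clear Y' X' J' I' hJ hX hY hIU hIm hS hnA hnext hinj hcard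
    generalize (∃ a ∈ I \ At, next B a = x) = E at *
    grind
  · ext x
    rw [mem_cover_moveB hB hA hd hS, Finset.mem_sdiff]
    have h1 := Y' x
    have h2 := J' x
    have h3 := I' x
    clear X' Y' J' I' hJ hX hY hIU hIm hS hnA hnext hinj hcard
    generalize (∃ a ∈ I \ At, next B a = x) = E at *
    grind

end TTclass

open TTclass in
/-- If `(A, B) ∈ 𝒯` and `A ∩ B = ∅`, then the equivalence class of `(A, B)`
in `𝒯` is finite and has exactly `2^s` elements, where `s = |A ∩ (B−1)|`. -/
theorem class_of_disjoint_pair_has_two_pow_s_elements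
    (n m : ℕ) (hn : 1 ≤ n) (hm : 1 ≤ m) (A B : Finset ℤ) (hAB : TTmem n m A B)
    (hdisj : A ∩ B = ∅) :
    {q : Finset ℤ × Finset ℤ | TTmem n m q.1 q.2 ∧ TTequiv A B q.1 q.2}.Finite ∧
    {q : Finset ℤ × Finset ℤ | TTmem n m q.1 q.2 ∧ TTequiv A B q.1 q.2}.ncard
      = 2 ^ (A ∩ B.image (· - 1)).card := by
  have hd : ∀ a ∈ A, a ∉ B :=
    Finset.disjoint_left.1 (Finset.disjoint_iff_inter_eq_empty.2 hdisj)
  have hB := disjoint_iff.1 hAB.2.2.2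
  have hA := hAB.2.2.1
  have hI : ∀ S ⊆ A ∩ B.image (· - 1), ∀ a ∈ S, a ∈ A ∧ a + 1 ∈ B := by
    intro S hS a ha
    have := hS ha
    rwa [Finset.mem_inter, mem_image_pred] at this
  have hset : {q : Finset ℤ × Finset ℤ | TTmem n m q.1 q.2 ∧ TTequiv A B q.1 q.2} =
      ((A ∩ B.image (· - 1)).powerset.image (fun S => (moveA A B S, moveB B S)) :
        Finset (Finset ℤ × Finset ℤ)) := by
    ext q
    rw [Finset.mem_coe, Finset.mem_image, Set.mem_ofPred_eq]
    constructor
    · rintro ⟨h1, h2⟩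
      obtain ⟨e1, e2⟩ := eq_moved hAB hd h1 h2
      exact ⟨_, Finset.mem_powerset.2 Finset.sdiff_subset, Prod.ext e1.symm e2.symm⟩
    · rintro ⟨S, hS, rfl⟩
      exact moved_mem_class hB hA hd (hI S (Finset.mem_powerset.1 hS)) hAB.1 hAB.2.1
  rw [hset]
  refine ⟨Finset.finite_toSet _, ?_⟩
  rw [Set.ncard_coe_finset, Finset.card_image_of_injOn, Finset.card_powerset]
  -- `S` is recovered as the set of points of `A` missing from the moved set
  have hrec : ∀ S ⊆ A ∩ B.image (· - 1), A \ moveA A B S = S := by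
    intro S hS
    have hS' := hI S hS
    ext x
    rw [Finset.mem_sdiff, mem_moveA (fun a ha => (hS' a ha).1)]
    have h1 : (∃ a ∈ S, next B a = x) → x ∉ A := by
      rintro ⟨a, ha, rfl⟩
      exact not_mem_A hB hA hd (hS' a ha).1 (hS' a ha).2 (lt_next B a) le_rfl
    have h2 : x ∈ S → x ∈ A := fun h => (hS' x h).1
    generalize (∃ a ∈ S, next B a = x) = E at *
    tauto
  intro S hS S' hS' h
  rw [← hrec S (Finset.mem_powerset.1 hS), ← hrec S' (Finset.mem_powerset.1 hS'),
    show moveA A B S = moveA A B S' from congrArg Prod.fst h]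
end
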